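/- In the double affine braid group B̃_n of type C∨C_n, define Y_i := P_i T_{(i⋯1)} T_0 T_{(i⋯1)}⁻¹ and X_i := P_i⁻¹ T_{(1⋯i)}⁻¹ K_0⁻¹ T_{(1⋯i)} for 1 ≤ i ≤ n. Then: the elements Y_1,…,Y_n pairwise commute; the elements X_1,…,X_n pairwise commute; T_iY_{i+1}T_i = Y_i and T_iX_iT_i = X_{i+1} for 1 ≤ i ≤ n−1; T_iY_j = Y_jT_i and T_iX_j = X_jT_i for 1 ≤ i ≤ n−1 and j ∉ {i, i+1}; T_nY_{n−1} = Y_{n−1}T_n and T_nX_{n−1} = X_{n−1}T_n; and X_i commutes with P_1⁻¹Y_1 for 2 ≤ i ≤ n−1. -/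

import Mathlib

/-!
Write `S_i = T_{(i⋯1)} T_0 T_{(i⋯1)}⁻¹`, so that `Y_i = P_i S_i`. The relations
`P_i = T_i P_{i+1} T_i` and `S_{i+1} = T_i S_i T_i⁻¹` give `T_i Y_{i+1} T_i = Y_i` at once. Both
`P_j` and `S_j` commute with `T_i` for `1 ≤ i < n`, `i ∉ {j - 1, j}`, hence so does `Y_j`
(`AffineBraid.commute_T_Y`). For the pairwise commutation, `Y_1` and `Y_2` commute by a short
computation in the group generated by `T_0`, `T_1` and `P_2` (`commute_base`), and the relations
between the `T_i` and the `Y_j` propagate this to all pairs. Only the relations of the affine braid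
group of type `C` satisfied by `T_0, …, T_n` enter here (`AffineBraid`).

The statements on the `X_i` come from those on the `Y_i`: in the opposite group the elements
`K_0, T_1, …, T_n` satisfy the same relations, and the elements `Y_i` they define there are the
`X_i⁻¹` (`unop_Yel_opT`).

Finally `P_1⁻¹ Y_1 = T_0`, which commutes with `P_i` and with `T_{(1⋯i)}⁻¹ K_0⁻¹ T_{(1⋯i)}` for
`i ≥ 2`; for the latter the case `i = 2` is the mixed relation between `T_0` and `K_0`.
-/

/-- The element `T_{(i⋯j)}`: for `j > i > 0` it is `T_i T_{i+1} ⋯ T_{j−1}`, for `i > j > 0`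
it is `T_{i−1} ⋯ T_{j+1} T_j`, and for `i = j` it is `1`. -/
def Tseg {G : Type*} [Monoid G] (t : ℕ → G) (i j : ℕ) : G :=
  if i ≤ j then ((List.range (j - i)).map fun k => t (i + k)).prod
  else ((List.range (i - j)).map fun k => t (i - 1 - k)).prod

/-- The element `P_i := T_i ⋯ T_{n−1} T_n T_{n−1} ⋯ T_i = T_{(i⋯n)} T_n T_{(n⋯i)}`. -/
def Pel {G : Type*} [Monoid G] (t : ℕ → G) (n i : ℕ) : G :=
  Tseg t i n * t n * Tseg t n i

/-- `Y_i := P_i T_{(i⋯1)} T_0 T_{(i⋯1)}⁻¹`. -/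
def Yel {G : Type*} [Group G] (t : ℕ → G) (n i : ℕ) : G :=
  Pel t n i * Tseg t i 1 * t 0 * (Tseg t i 1)⁻¹

/-- `X_i := P_i⁻¹ T_{(1⋯i)}⁻¹ K_0⁻¹ T_{(1⋯i)}`. -/
def Xel {G : Type*} [Group G] (t : ℕ → G) (K0 : G) (n i : ℕ) : G :=
  (Pel t n i)⁻¹ * (Tseg t 1 i)⁻¹ * K0⁻¹ * Tseg t 1 i

open MulOpposite

/-! ### Recursions for the segments, `P_i`, `Y_i` and `X_i` -/

section Recursions

variable {M : Type*} [Monoid M] (t : ℕ → M)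

lemma Tseg_self (i : ℕ) : Tseg t i i = 1 := by simp [Tseg]

lemma Tseg_up_left {i n : ℕ} (h : i < n) : Tseg t i n = t i * Tseg t (i + 1) n := by
  obtain ⟨d, rfl⟩ := Nat.exists_eq_add_of_lt h
  have h1 : i + d + 1 - i = d + 1 := by omega
  have h2 : i + d + 1 - (i + 1) = d := by omega
  rw [Tseg, Tseg, if_pos (by omega), if_pos (by omega), h1, h2, List.range_succ_eq_map]
  simp [Function.comp_def, Nat.add_assoc, Nat.add_comm 1]

lemma Tseg_up_right {i n : ℕ} (h : i ≤ n) : Tseg t i (n + 1) = Tseg t i n * t n := by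
  obtain ⟨d, rfl⟩ := Nat.exists_eq_add_of_le h
  have h1 : i + d + 1 - i = d + 1 := by omega
  have h2 : i + d - i = d := by omega
  rw [Tseg, Tseg, if_pos (by omega), if_pos (by omega), h1, h2, List.range_succ]
  simp

lemma Tseg_down_of_le {i n : ℕ} (h : i ≤ n) :
    Tseg t n i = ((List.range (n - i)).map fun k => t (n - 1 - k)).prod := by
  rcases h.eq_or_lt with rfl | h
  · simp [Tseg]
  · rw [Tseg, if_neg (by omega)]

lemma Tseg_down_right {i n : ℕ} (h : i < n) : Tseg t n i = Tseg t n (i + 1) * t i := by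
  rw [Tseg_down_of_le t h.le, Tseg_down_of_le t (Nat.succ_le_of_lt h)]
  have h1 : n - i = (n - (i + 1)) + 1 := by omega
  have h2 : n - 1 - (n - (i + 1)) = i := by omega
  rw [h1, List.range_succ]
  simp [h2]

lemma Tseg_down_left {i n : ℕ} (h : i ≤ n) : Tseg t (n + 1) i = t n * Tseg t n i := by
  rw [Tseg_down_of_le t h, Tseg_down_of_le t (h.trans n.le_succ)]
  have h1 : n + 1 - i = (n - i) + 1 := by omega
  rw [h1, List.range_succ_eq_map]
  simp [Function.comp_def, Nat.sub_sub, Nat.add_comm 1]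

lemma Pel_self (n : ℕ) : Pel t n n = t n := by simp [Pel, Tseg_self]

lemma Pel_rec {i n : ℕ} (h : i < n) : Pel t n i = t i * Pel t n (i + 1) * t i := by
  simp only [Pel, Tseg_up_left t h, Tseg_down_right t h, mul_assoc]

end Recursions

section GroupRecursions

variable {G : Type*} [Group G] (t : ℕ → G)

/-- `S_i = T_{(i⋯1)} T_0 T_{(i⋯1)}⁻¹`, the second factor of `Y_i = P_i S_i`. -/
def Sel (i : ℕ) : G := Tseg t i 1 * t 0 * (Tseg t i 1)⁻¹

lemma Yel_eq (n i : ℕ) : Yel t n i = Pel t n i * Sel t i := by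
  simp only [Yel, Sel, mul_assoc]

lemma Sel_one : Sel t 1 = t 0 := by simp [Sel, Tseg_self]

lemma Sel_succ {i : ℕ} (h : 1 ≤ i) : Sel t (i + 1) = t i * Sel t i * (t i)⁻¹ := by
  simp only [Sel, Tseg_down_left t h]
  group

lemma Yel_one (n : ℕ) : Yel t n 1 = Pel t n 1 * t 0 := by rw [Yel_eq, Sel_one]

lemma Yel_rec {i n : ℕ} (h1 : 1 ≤ i) (h : i < n) : t i * Yel t n (i + 1) * t i = Yel t n i := by
  rw [Yel_eq, Yel_eq, Sel_succ t h1, Pel_rec t h]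
  group

lemma Yel_succ {i n : ℕ} (h1 : 1 ≤ i) (h : i < n) :
    Yel t n (i + 1) = (t i)⁻¹ * Yel t n i * (t i)⁻¹ := by
  rw [← Yel_rec t h1 h]
  group

lemma Xel_rec (K0 : G) {i n : ℕ} (h1 : 1 ≤ i) (h : i < n) :
    t i * Xel t K0 n i * t i = Xel t K0 n (i + 1) := by
  rw [Xel, Xel, Tseg_up_right t h1, Pel_rec t h]
  group

end GroupRecursions

/-! ### The affine braid group of type `C` -/

/-- The elements `t 0, …, t n` satisfy the relations of the affine braid group of type `C_n`. -/
structure AffineBraid {G : Type*} [Group G] (t : ℕ → G) (n : ℕ) : Prop where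
  two_le : 2 ≤ n
  comm : ∀ i j : ℕ, i + 2 ≤ j → j ≤ n → Commute (t i) (t j)
  braid : ∀ i : ℕ, 1 ≤ i → i + 2 ≤ n → t i * t (i + 1) * t i = t (i + 1) * t i * t (i + 1)
  quartic_zero : t 0 * t 1 * t 0 * t 1 = t 1 * t 0 * t 1 * t 0
  quartic_last : t (n - 1) * t n * t (n - 1) * t n = t n * t (n - 1) * t n * t (n - 1)

/-- The computation behind `Y_1 Y_2 = Y_2 Y_1`, with `a = T_1`, `b = T_0` and `p = P_2`. -/
lemma commute_base {G : Type*} [Group G] {a b p : G} (hbp : Commute b p)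
    (hab : b * a * b * a = a * b * a * b) (hap : Commute (a * p * a) p) :
    Commute (a * p * a * b) (p * (a * b * a⁻¹)) := by
  have hab' : b * a * b * a⁻¹ = a⁻¹ * (b * a * b) := by
    rw [mul_inv_eq_iff_eq_mul, mul_assoc a⁻¹, eq_inv_mul_iff_mul_eq]
    simp only [mul_assoc] at hab ⊢
    exact hab.symm
  calc a * p * a * b * (p * (a * b * a⁻¹))
      = a * p * a * (b * p) * (a * b * a⁻¹) := by group
    _ = (a * p * a * p) * (b * a * b * a⁻¹) := by rw [hbp.eq]; group
    _ = p * (a * p * a) * (a⁻¹ * (b * a * b)) := by rw [hap.eq, hab']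
    _ = p * a * (p * b) * a * b := by group
    _ = p * (a * b * a⁻¹) * (a * p * a * b) := by rw [← hbp.eq]; group

namespace AffineBraid

variable {G : Type*} [Group G] {t : ℕ → G} {n : ℕ}

lemma commute_T_P_low (H : AffineBraid t n) {i j : ℕ} (hij : i + 2 ≤ j) (hj : j ≤ n) :
    Commute (t i) (Pel t n j) := by
  induction hj using Nat.decreasingInduction with
  | self => rw [Pel_self]; exact H.comm i n hij le_rfl
  | of_succ k hk ih =>
    rw [Pel_rec t hk]
    have hc := H.comm i k hij hk.le
    exact (hc.mul_right (ih (by omega))).mul_right hc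

lemma commute_T_P_high (H : AffineBraid t n) {i j : ℕ} (hj1 : 1 ≤ j) (hji : j < i) (hi : i ≤ n) :
    Commute (t i) (Pel t n j) := by
  have hj : j ≤ n := by omega
  induction hj using Nat.decreasingInduction with
  | self => omega
  | of_succ k hk ih =>
    rcases (show k + 1 < i ∨ i = k + 1 by omega) with h | rfl
    · have hc := (H.comm k i h hi).symm
      rw [Pel_rec t hk]
      exact (hc.mul_right (ih (by omega) h)).mul_right hc
    rcases (show k + 1 = n ∨ k + 1 < n by omega) with h | h
    · subst h
      have hq := H.quartic_last
      rw [Nat.add_sub_cancel] at hq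
      rw [Pel_rec t hk, Pel_self]
      simp only [Commute, SemiconjBy, mul_assoc] at hq ⊢
      exact hq.symm
    · -- here `P_k = T_k T_{k+1} P_{k+2} T_{k+1} T_k`, and the braid relation is used on both sides
      have hb := H.braid k hj1 h
      have hc := H.commute_T_P_low (i := k) (j := k + 2) le_rfl h
      rw [Pel_rec t hk, Pel_rec t h]
      calc t (k + 1) * (t k * (t (k + 1) * Pel t n (k + 2) * t (k + 1)) * t k)
          = (t (k + 1) * t k * t (k + 1)) * Pel t n (k + 2) * t (k + 1) * t k := by group
        _ = t k * t (k + 1) * (t k * Pel t n (k + 2)) * t (k + 1) * t k := by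
            rw [← hb]; group
        _ = t k * t (k + 1) * Pel t n (k + 2) * (t k * t (k + 1) * t k) := by
            rw [hc.eq]; group
        _ = t k * (t (k + 1) * Pel t n (k + 2) * t (k + 1)) * t k * t (k + 1) := by
            rw [hb]; group

lemma commute_T_S_high (H : AffineBraid t n) {i j : ℕ} (hj1 : 1 ≤ j) (hji : j < i) (hi : i ≤ n) :
    Commute (t i) (Sel t j) := by
  induction j, hj1 using Nat.le_induction with
  | base => rw [Sel_one]; exact (H.comm 0 i hji hi).symm
  | succ k hk ih =>
    have hc := (H.comm k i hji hi).symm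
    rw [Sel_succ t hk]
    exact (hc.mul_right (ih (by omega))).mul_right hc.inv_right

lemma commute_T_S_low (H : AffineBraid t n) {i j : ℕ} (hi : 1 ≤ i) (hij : i + 2 ≤ j)
    (hj : j ≤ n) : Commute (t i) (Sel t j) := by
  induction j, hij using Nat.le_induction with
  | base =>
    have hb := H.braid i hi hj
    have hc := H.commute_T_S_high (i := i + 1) (j := i) hi (by omega) (by omega)
    -- `T_i (T_{i+1} T_i) = (T_{i+1} T_i) T_{i+1}`, and `T_{i+1}` commutes with `S_i`
    have e : t i = (t (i + 1) * t i) * t (i + 1) * (t (i + 1) * t i)⁻¹ := by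
      rw [eq_mul_inv_iff_mul_eq, ← hb, mul_assoc]
    have es : Sel t (i + 2) = (t (i + 1) * t i) * Sel t i * (t (i + 1) * t i)⁻¹ := by
      rw [Sel_succ t (by omega : 1 ≤ i + 1), Sel_succ t hi]
      group
    rw [es]
    nth_rewrite 1 [e]
    exact (Commute.conj_iff _).2 hc
  | succ k hk ih =>
    have hc := H.comm i k hk (by omega)
    rw [Sel_succ t (by omega)]
    exact (hc.mul_right (ih (by omega))).mul_right hc.inv_right

lemma commute_T_Y_high (H : AffineBraid t n) {i j : ℕ} (hj1 : 1 ≤ j) (hji : j < i) (hi : i ≤ n) :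
    Commute (t i) (Yel t n j) := by
  rw [Yel_eq]
  exact (H.commute_T_P_high hj1 hji hi).mul_right (H.commute_T_S_high hj1 hji hi)

lemma commute_T_Y (H : AffineBraid t n) {i j : ℕ} (hi1 : 1 ≤ i) (hi : i ≤ n) (hj1 : 1 ≤ j)
    (hj : j ≤ n) (h : j ≠ i) (h' : j ≠ i + 1) : Commute (t i) (Yel t n j) := by
  rcases (show j < i ∨ i + 2 ≤ j by omega) with hlt | hlt
  · exact H.commute_T_Y_high hj1 hlt hi
  · rw [Yel_eq]
    exact (H.commute_T_P_low hlt hj).mul_right (H.commute_T_S_low hi1 hlt hj)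

lemma commute_P_one (H : AffineBraid t n) {j : ℕ} (hj1 : 2 ≤ j) (hj : j ≤ n) :
    Commute (Pel t n 1) (Pel t n j) := by
  induction hj using Nat.decreasingInduction with
  | self => rw [Pel_self]; exact (H.commute_T_P_high le_rfl hj1 le_rfl).symm
  | of_succ k hk ih =>
    have hc := (H.commute_T_P_high (i := k) le_rfl hj1 hk.le).symm
    rw [Pel_rec t hk]
    exact (hc.mul_right (ih (by omega))).mul_right hc

lemma commute_Y_one_two (H : AffineBraid t n) : Commute (Yel t n 1) (Yel t n 2) := by
  have hn := H.two_le
  have hP := H.commute_P_one le_rfl hn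
  rw [Pel_rec t (show 1 < n by omega)] at hP
  rw [Yel_eq, Yel_eq, Sel_succ t le_rfl, Sel_one, Pel_rec t (show 1 < n by omega)]
  exact commute_base (H.commute_T_P_low le_rfl hn) H.quartic_zero hP

/-- If `Y_i` commutes with `Y_{i+1}`, it commutes with every later `Y_j`, since
`Y_{j+1} = T_j⁻¹ Y_j T_j⁻¹` and `T_j` commutes with `Y_i` for `j > i`. -/
lemma commute_Y_of_succ (H : AffineBraid t n) {i j : ℕ} (hi : 1 ≤ i) (hij : i < j) (hj : j ≤ n)
    (h : Commute (Yel t n i) (Yel t n (i + 1))) : Commute (Yel t n i) (Yel t n j) := by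
  induction j, (show i + 1 ≤ j from hij) using Nat.le_induction with
  | base => exact h
  | succ k hk ih =>
    have hc := (H.commute_T_Y_high hi hk (by omega)).symm.inv_right
    rw [Yel_succ t (by omega) (by omega)]
    exact (hc.mul_right (ih hk (by omega))).mul_right hc

/-- The step from `i` to `i + 1` uses `Y_{i+1} = T_i⁻¹ Y_i T_i⁻¹`, both of whose factors commute
with `Y_{i+2}`. -/
lemma commute_Y_succ (H : AffineBraid t n) {i : ℕ} (hi : 1 ≤ i) (hn : i + 1 ≤ n) :
    Commute (Yel t n i) (Yel t n (i + 1)) := by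
  induction i, hi using Nat.le_induction with
  | base => exact H.commute_Y_one_two
  | succ k hk ih =>
    have hY := H.commute_Y_of_succ (j := k + 2) hk (by omega) hn (ih (by omega))
    have hc := (H.commute_T_Y (i := k) (j := k + 1 + 1) hk (by omega) (by omega) hn (by omega)
      (by omega)).inv_left
    rw [Yel_succ t hk (by omega)]
    exact (hc.mul_left hY).mul_left hc

lemma commute_Y (H : AffineBraid t n) {i j : ℕ} (hi1 : 1 ≤ i) (hi : i ≤ n) (hj1 : 1 ≤ j)
    (hj : j ≤ n) : Commute (Yel t n i) (Yel t n j) := by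
  rcases lt_trichotomy i j with h | rfl | h
  · exact H.commute_Y_of_succ hi1 h hj (H.commute_Y_succ hi1 (by omega))
  · exact Commute.refl _
  · exact (H.commute_Y_of_succ hj1 h hi (H.commute_Y_succ hj1 (by omega))).symm

end AffineBraid

/-! ### The elements `X_i` through the opposite group -/

section Opposite

variable {G : Type*}

/-- The family `K_0, T_1, T_2, …` in the opposite group. -/
def opT (t : ℕ → G) (K0 : G) (i : ℕ) : Gᵐᵒᵖ := if i = 0 then op K0 else op (t i)

lemma opT_zero (t : ℕ → G) (K0 : G) : opT t K0 0 = op K0 := rfl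

lemma opT_pos (t : ℕ → G) (K0 : G) {i : ℕ} (h : 1 ≤ i) : opT t K0 i = op (t i) :=
  if_neg (by omega)

variable [Group G]

lemma unop_Pel_opT (t : ℕ → G) (K0 : G) {n i : ℕ} (h1 : 1 ≤ i) (h : i ≤ n) :
    unop (Pel (opT t K0) n i) = Pel t n i := by
  induction h using Nat.decreasingInduction with
  | self => rw [Pel_self, Pel_self, opT_pos t K0 h1, unop_op]
  | of_succ k hk ih =>
    rw [Pel_rec _ hk, Pel_rec _ hk, unop_mul, unop_mul, ih (by omega), opT_pos t K0 h1, unop_op,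
      mul_assoc]

lemma unop_Yel_opT (t : ℕ → G) (K0 : G) {n i : ℕ} (h1 : 1 ≤ i) (h : i ≤ n) :
    unop (Yel (opT t K0) n i) = (Xel t K0 n i)⁻¹ := by
  induction i, h1 using Nat.le_induction with
  | base =>
    rw [Yel_one, opT_zero, unop_mul, unop_Pel_opT t K0 le_rfl h, Xel, Tseg_self, unop_op]
    group
  | succ k hk ih =>
    rw [Yel_succ _ hk h, ← Xel_rec t K0 hk h, opT_pos t K0 hk, unop_mul, unop_mul,
      ih (by omega), unop_inv, unop_op]
    group

end Opposite

/-- In the double affine braid group `B̃ₙ` of type `C∨Cₙ` — i.e. for any group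
`G` and elements `T_0, …, T_n, K_0` satisfying its defining relations — the elements
`Y_i := P_i T_{(i⋯1)} T_0 T_{(i⋯1)}⁻¹` and `X_i := P_i⁻¹ T_{(1⋯i)}⁻¹ K_0⁻¹ T_{(1⋯i)}` satisfy:
the `Y_i` pairwise commute, the `X_i` pairwise commute, `T_iY_{i+1}T_i = Y_i`,
`T_iX_iT_i = X_{i+1}`, `T_iY_j = Y_jT_i` and `T_iX_j = X_jT_i` for `j ∉ {i, i+1}`,
`T_nY_{n−1} = Y_{n−1}T_n`, `T_nX_{n−1} = X_{n−1}T_n`, and `X_i` commutes with `P_1⁻¹Y_1`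
for `2 ≤ i ≤ n−1`. -/
theorem XY_relations_in_DABG {G : Type*} [Group G] (n : ℕ) (hn : 2 ≤ n)
    (t : ℕ → G) (K0 : G)
    (hcomm : ∀ i j : ℕ, i + 2 ≤ j → j ≤ n → t i * t j = t j * t i)
    (hbraid : ∀ i : ℕ, 1 ≤ i → i + 2 ≤ n →
      t i * t (i + 1) * t i = t (i + 1) * t i * t (i + 1))
    (h01 : t 0 * t 1 * t 0 * t 1 = t 1 * t 0 * t 1 * t 0)
    (hquartic : t (n - 1) * t n * t (n - 1) * t n = t n * t (n - 1) * t n * t (n - 1))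
    (hK0comm : ∀ i : ℕ, 2 ≤ i → i ≤ n → K0 * t i = t i * K0)
    (hK0T1 : t 1 * K0 * t 1 * K0 = K0 * t 1 * K0 * t 1)
    (hT0K0 : t 0 * (t 1)⁻¹ * K0 * t 1 = (t 1)⁻¹ * K0 * t 1 * t 0) :
    (∀ i j : ℕ, 1 ≤ i → i ≤ n → 1 ≤ j → j ≤ n →
        Yel t n i * Yel t n j = Yel t n j * Yel t n i) ∧
    (∀ i j : ℕ, 1 ≤ i → i ≤ n → 1 ≤ j → j ≤ n →
        Xel t K0 n i * Xel t K0 n j = Xel t K0 n j * Xel t K0 n i) ∧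
    (∀ i : ℕ, 1 ≤ i → i + 1 ≤ n → t i * Yel t n (i + 1) * t i = Yel t n i) ∧
    (∀ i : ℕ, 1 ≤ i → i + 1 ≤ n → t i * Xel t K0 n i * t i = Xel t K0 n (i + 1)) ∧
    (∀ i j : ℕ, 1 ≤ i → i ≤ n - 1 → 1 ≤ j → j ≤ n → j ≠ i → j ≠ i + 1 →
        t i * Yel t n j = Yel t n j * t i) ∧
    (∀ i j : ℕ, 1 ≤ i → i ≤ n - 1 → 1 ≤ j → j ≤ n → j ≠ i → j ≠ i + 1 →
        t i * Xel t K0 n j = Xel t K0 n j * t i) ∧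
    (t n * Yel t n (n - 1) = Yel t n (n - 1) * t n) ∧
    (t n * Xel t K0 n (n - 1) = Xel t K0 n (n - 1) * t n) ∧
    (∀ i : ℕ, 2 ≤ i → i ≤ n - 1 →
        Xel t K0 n i * ((Pel t n 1)⁻¹ * Yel t n 1)
          = ((Pel t n 1)⁻¹ * Yel t n 1) * Xel t K0 n i) := by
  have H : AffineBraid t n := ⟨hn, hcomm, hbraid, h01, hquartic⟩
  have H' : AffineBraid (opT t K0) n := by
    refine ⟨hn, ?_, ?_, ?_, ?_⟩
    · intro i j hij hj
      rw [opT_pos t K0 (by omega : 1 ≤ j)]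
      rcases Nat.eq_zero_or_pos i with rfl | hi
      · exact Commute.op (hK0comm j (by omega) hj)
      · rw [opT_pos t K0 hi]
        exact Commute.op (hcomm i j hij hj)
    · intro i hi h
      rw [opT_pos t K0 hi, opT_pos t K0 (by omega : 1 ≤ i + 1)]
      apply unop_injective
      simpa [mul_assoc] using hbraid i hi h
    · rw [opT_zero, opT_pos t K0 le_rfl]
      apply unop_injective
      simpa [mul_assoc] using hK0T1
    · rw [opT_pos t K0 (by omega : 1 ≤ n - 1), opT_pos t K0 (by omega : 1 ≤ n)]
      apply unop_injective
      simpa [mul_assoc] using hquartic.symm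
  have hTX : ∀ i j : ℕ, 1 ≤ i → i ≤ n → 1 ≤ j → j ≤ n → j ≠ i → j ≠ i + 1 →
      Commute (t i) (Xel t K0 n j) := by
    intro i j hi1 hi hj1 hj h h'
    have hc := (H'.commute_T_Y hi1 hi hj1 hj h h').unop
    rw [unop_Yel_opT t K0 hj1 hj, opT_pos t K0 hi1, unop_op] at hc
    exact Commute.inv_right_iff.1 hc
  refine ⟨fun i j hi1 hi hj1 hj => H.commute_Y hi1 hi hj1 hj, ?_, fun i h1 h => Yel_rec t h1 h,
    fun i h1 h => Xel_rec t K0 h1 h,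
    fun i j hi1 hi hj1 hj h h' => H.commute_T_Y hi1 (by omega) hj1 hj h h',
    fun i j hi1 hi hj1 hj h h' => hTX i j hi1 (by omega) hj1 hj h h',
    H.commute_T_Y_high (by omega) (by omega) le_rfl,
    hTX n (n - 1) (by omega) le_rfl (by omega) (by omega) (by omega) (by omega), ?_⟩
  · intro i j hi1 hi hj1 hj
    have hc := (H'.commute_Y hi1 hi hj1 hj).unop
    rw [unop_Yel_opT t K0 hi1 hi, unop_Yel_opT t K0 hj1 hj] at hc
    exact Commute.inv_inv_iff.1 hc
  · intro i hi2 hi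
    rw [Yel_one, inv_mul_cancel_left]
    -- `T_0` commutes with the conjugate of `K_0` by `T_{(1⋯i)}`
    have hU : Commute (t 0) ((Tseg t 1 i)⁻¹ * K0 * Tseg t 1 i) := by
      induction i, hi2 using Nat.le_induction with
      | base =>
        rw [Tseg_up_right t le_rfl, Tseg_self, one_mul]
        simpa only [Commute, SemiconjBy, mul_assoc] using hT0K0
      | succ k hk ih =>
        have hc : Commute (t 0) (t k) := hcomm 0 k hk (by omega)
        have e : (Tseg t 1 (k + 1))⁻¹ * K0 * Tseg t 1 (k + 1)
            = (t k)⁻¹ * ((Tseg t 1 k)⁻¹ * K0 * Tseg t 1 k) * t k := by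
          rw [Tseg_up_right t (by omega)]
          group
        rw [e]
        exact (hc.inv_right.mul_right (ih (by omega))).mul_right hc
    have e : Xel t K0 n i = (Pel t n i)⁻¹ * ((Tseg t 1 i)⁻¹ * K0 * Tseg t 1 i)⁻¹ := by
      rw [Xel]
      group
    rw [e]
    exact ((H.commute_T_P_low hi2 (by omega)).inv_right.mul_right hU.inv_right).symm
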